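/- (Achievability of the distributed task-encoding theorem, IID case.) Fix ρ > 0 and set ρ̃ = 1/(1+ρ). Let P_{XY} be a joint PMF on the finite set X × Y, and let {(X_i,Y_i)}_{i=1}^∞ be IID with distribution P_{XY}. Suppose R_X > H_{ρ̃}(P_X), R_Y > H_{ρ̃}(P_Y), and R_X + R_Y > H_{ρ̃}(P_{XY}) + K_{ρ̃}(X;Y). Then there exists a sequence of pairs of functions f_n : X^n → {1,…,⌊2^{n·R_X}⌋}, g_n : Y^n → {1,…,⌊2^{n·R_Y}⌋} such that E[L(X^n,Y^n)^ρ] → 1 as n → ∞, where L(x^n,y^n) = |{(x',y') ∈ X^n × Y^n : f_n(x') = f_n(x^n) ∧ g_n(y') = g_n(y^n)}|. -/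

import Mathlib

open Filter

/-- `P` is a probability mass function on the finite type `X`. -/
def IsPMF {X : Type*} [Fintype X] (P : X → ℝ) : Prop :=
  (∀ x, 0 ≤ P x) ∧ ∑ x, P x = 1

/-- Rényi entropy of order `α` (base-2 logarithm). -/
noncomputable def renyiEntropy {X : Type*} [Fintype X] (α : ℝ) (P : X → ℝ) : ℝ :=
  (1 - α)⁻¹ * Real.logb 2 (∑ x, P x ^ α)

/-- Relative `α`-entropy `Δ_α(P‖Q)` (base-2 logarithm). -/
noncomputable def relAlphaEntropy {X : Type*} [Fintype X] (α : ℝ) (P Q : X → ℝ) : ℝ :=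
  (α / (1 - α)) * Real.logb 2 (∑ x, P x * Q x ^ (α - 1))
    + Real.logb 2 (∑ x, Q x ^ α)
    - (1 - α)⁻¹ * Real.logb 2 (∑ x, P x ^ α)

/-- The dependence measure `K_α(X;Y)`: the minimum of `Δ_α(P_{XY}‖Q_X Q_Y)` over all PMFs
`Q_X` and `Q_Y`.  (Restricting to everywhere-positive `Q_X`, `Q_Y` gives the same value,
since by the convention `p/0 = ∞` any `Q` vanishing on the support of `P` yields an
infinite relative entropy, and `Δ_α` is continuous in positive `Q`.) -/
noncomputable def Kdep {X Y : Type*} [Fintype X] [Fintype Y] (α : ℝ) (P : X × Y → ℝ) : ℝ :=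
  sInf {r : ℝ | ∃ QX : X → ℝ, ∃ QY : Y → ℝ, IsPMF QX ∧ IsPMF QY ∧
    (∀ x, 0 < QX x) ∧ (∀ y, 0 < QY y) ∧
    r = relAlphaEntropy α P (fun p => QX p.1 * QY p.2)}

/-- The joint list size of `(xs,ys)` under the encoders `f` and `g`. -/
noncomputable def jointListSize {X Y : Type*} [Fintype X] [Fintype Y] {MX MY : ℕ}
    (f : X → Fin MX) (g : Y → Fin MY) (x : X) (y : Y) : ℕ :=
  (Finset.univ.filter (fun p : X × Y => f p.1 = f x ∧ g p.2 = g y)).card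

/-!
Call a positive function `a` on `X` a list-size profile at rate `R` if `∑ x, 1 / a x < 2 ^ R`. For
two such profiles `a` and `b` and large `n`, the set `X^n` can be labelled with `⌊2 ^ (n R)⌋` labels
so that `x` shares its label with at most `⌈min (∏ a (x i)) (∏ b (x i))⌉` sequences: split `X^n`
into dyadic levels of this bound and cut each level into blocks. As `⌈t⌉ ^ ρ ≤ 1 + 2 ^ ρ t ^ ρ`, the
`ρ`-th moment of the joint list size is at most `1` plus multiples of the `n`-th powers of
`E[aX ^ ρ]`, `E[aY ^ ρ]` and `E[bX ^ ρ bY ^ ρ]`; the minimum is what lets the marginal terms use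
profiles other than those of the joint term. It remains to make the three expectations smaller than
`1`. For `α = 1 / (1 + ρ)` take `aX` inversely proportional to (a slight enlargement of) `P_X ^ α`,
likewise `aY`, and `bX`, `bY` inversely proportional to `QX ^ α`, `QY ^ α` with `QX`, `QY` nearly
optimal in `K_α(X;Y)`: the strict rate inequalities are what leaves room for the constants of
proportionality.
-/

section Encoder

open Finset

variable {S : Type*}

lemma exists_map_fin_card_fiber_le (T : Finset S) {m k : ℕ} [NeZero m] [NeZero k]
    (hT : #T ≤ m * k) : ∃ f : S → Fin m, ∀ j, #{x ∈ T | f x = j} ≤ k := by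
  have hcard : (T : Set S).encard ≤ (Set.univ : Set (Fin m × Fin k)).encard := by
    rw [Set.encard_coe_eq_coe_finsetCard, Set.encard_univ, ENat.card_eq_coe_fintype_card,
      Fintype.card_prod, Fintype.card_fin, Fintype.card_fin]
    exact_mod_cast hT
  obtain ⟨e, -, he⟩ := T.finite_toSet.exists_injOn_of_encard_le hcard
  refine ⟨fun x => (e x).1, fun j => ?_⟩
  calc #{x ∈ T | (e x).1 = j} ≤ #(univ : Finset (Fin k)) := by
        refine card_le_card_of_injOn (fun x => (e x).2) (fun _ _ => mem_univ _) ?_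
        intro x hx y hy hxy
        simp only [coe_filter, Set.mem_ofPred_eq] at hx hy
        exact he hx.1 hy.1 (Prod.ext (hx.2.trans hy.2.symm) hxy)
    _ = k := card_fin k

variable [Fintype S]

lemma exists_encoder_card_fiber_le_size {κ : Type*} [Fintype κ] (level : S → κ)
    (size : κ → ℕ) [∀ k, NeZero (size k)] {M : ℕ}
    (hM : ∑ x, (size (level x) : ℝ)⁻¹ + Fintype.card κ ≤ M) :
    ∃ f : S → Fin M, ∀ x, #{x' | f x' = f x} ≤ size (level x) := by
  classical
  have hblocks (k : κ) : ∃ g : S → Fin (#{x | level x = k} / size k + 1),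
      ∀ j, #{x ∈ ({x | level x = k} : Finset S) | g x = j} ≤ size k :=
    exists_map_fin_card_fiber_le _
      (by rw [add_one_mul]; exact (Nat.lt_div_mul_add (NeZero.pos _)).le)
  choose g hg using hblocks
  have hlabels :
      Fintype.card (Σ k, Fin (#{x | level x = k} / size k + 1)) ≤ Fintype.card (Fin M) := by
    simp only [Fintype.card_sigma, Fintype.card_fin]
    rw [← Nat.cast_le (α := ℝ)]
    refine le_trans ?_ hM
    rw [← sum_fiberwise univ level, Nat.cast_sum, ← nsmul_one (Fintype.card κ), ← card_univ,
      ← sum_const, ← sum_add_distrib]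
    refine sum_le_sum fun k _ => ?_
    have hconst : ∑ x with level x = k, (size (level x) : ℝ)⁻¹
        = #{x | level x = k} * (size k : ℝ)⁻¹ := by
      rw [← nsmul_eq_mul, ← sum_const]
      exact sum_congr rfl fun x hx => by rw [(mem_filter.1 hx).2]
    rw [hconst, Nat.cast_succ, ← div_eq_mul_inv]
    gcongr
    exact Nat.cast_div_le
  obtain ⟨e⟩ := Function.Embedding.nonempty_of_card_le hlabels
  refine ⟨fun x => e ⟨level x, g (level x) x⟩, fun x => ?_⟩
  refine (card_le_card fun x' hx' => ?_).trans (hg (level x) (g (level x) x))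
  simp only [mem_filter, mem_univ, true_and, e.injective.eq_iff, Sigma.mk.injEq] at hx' ⊢
  obtain ⟨hlevel, hlabel⟩ := hx'
  rw [hlevel] at hlabel
  exact ⟨hlevel, eq_of_heq hlabel⟩

lemma exists_encoder_card_fiber_le (l : S → ℕ) (hl : ∀ x, l x ≠ 0) {K M : ℕ}
    (hK : ∀ x, l x < 2 ^ K) (hM : 2 * ∑ x, (l x : ℝ)⁻¹ + K ≤ M) :
    ∃ f : S → Fin M, ∀ x, #{x' | f x' = f x} ≤ l x := by
  let level (x : S) : Fin K := ⟨Nat.log 2 (l x), Nat.log_lt_of_lt_pow (hl x) (hK x)⟩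
  have hinv (x : S) : ((2 ^ (level x : ℕ) : ℕ) : ℝ)⁻¹ ≤ 2 * (l x : ℝ)⁻¹ := by
    have hlt : l x < 2 ^ (level x : ℕ) * 2 := Nat.lt_pow_succ_log_self one_lt_two (l x)
    have hpos : (0 : ℝ) < l x := by exact_mod_cast Nat.pos_of_ne_zero (hl x)
    rw [← div_eq_mul_inv, inv_le_comm₀ (by positivity) (by positivity), inv_div,
      div_le_iff₀ two_pos]
    exact_mod_cast hlt.le
  obtain ⟨f, hf⟩ := exists_encoder_card_fiber_le_size level (fun k => 2 ^ (k : ℕ)) (M := M) <| by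
    rw [Fintype.card_fin]
    refine le_trans ?_ hM
    rw [mul_sum]
    gcongr with x
    exact hinv x
  exact ⟨f, fun x => (hf x).trans (Nat.pow_log_le_self 2 (hl x))⟩

lemma exists_encoder_card_fiber_le_ceil {A : S → ℝ} (hA : ∀ x, 0 < A x) {K M : ℕ}
    (hK : ∀ x, A x ≤ 2 ^ K) (hM : 2 * ∑ x, (A x)⁻¹ + (K + 1) ≤ M) :
    ∃ f : S → Fin M, ∀ x, #{x' | f x' = f x} ≤ ⌈A x⌉₊ := by
  refine exists_encoder_card_fiber_le _ (fun x => (Nat.ceil_pos.2 (hA x)).ne') (K := K + 1)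
    (fun x => ?_) ?_
  · have hceil : ⌈A x⌉₊ ≤ 2 ^ K := Nat.ceil_le.2 (by exact_mod_cast hK x)
    exact hceil.trans_lt (Nat.pow_lt_pow_succ one_lt_two)
  · refine le_trans ?_ hM
    push_cast
    gcongr with x
    · exact hA x
    · exact Nat.le_ceil _

end Encoder

lemma eventually_le_natFloor_pow {f : ℕ → ℝ} {B : ℝ} (hB : 1 < B)
    (hf : f =o[atTop] fun n => B ^ n) : ∀ᶠ n in atTop, f n ≤ ⌊B ^ n⌋₊ := by
  have hone : (fun n : ℕ => (1 : ℝ) ^ n) =o[atTop] fun n => B ^ n :=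
    isLittleO_pow_pow_of_lt_left zero_le_one hB
  filter_upwards [(hf.add hone).def one_pos] with n hn
  rw [one_pow, one_mul, Real.norm_of_nonneg (pow_pos (one_pos.trans hB) n).le] at hn
  have hfn := (Real.le_norm_self _).trans hn
  linarith [Nat.lt_floor_add_one (B ^ n)]

lemma exists_prod_le_two_pow {X : Type*} [Finite X] {a : X → ℝ} (ha : ∀ x, 0 ≤ a x) :
    ∃ m : ℕ, ∀ (n : ℕ) (x : Fin n → X), ∏ i, a (x i) ≤ 2 ^ (m * n) := by
  obtain ⟨B, hB⟩ := Finite.exists_le a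
  obtain ⟨m, hm⟩ := pow_unbounded_of_one_lt B (one_lt_two (α := ℝ))
  refine ⟨m, fun n x => ?_⟩
  calc ∏ i, a (x i) ≤ ∏ _i : Fin n, (2 : ℝ) ^ m :=
        Finset.prod_le_prod (fun i _ => ha _) fun i _ => (hB _).trans hm.le
    _ = 2 ^ (m * n) := by rw [Finset.prod_const, Finset.card_fin, pow_mul]

/-- A list-size profile at rate `R`: a positive function `a` satisfying a strict inequality of
Kraft type. It is the one-letter data of a code of rate `R` on `X^n` whose cell containing `x` has
size about `∏ a (x i)`. -/
structure IsListProfile {X : Type*} [Fintype X] (R : ℝ) (a : X → ℝ) : Prop where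
  pos : ∀ x, 0 < a x
  sum_inv_lt : ∑ x, (a x)⁻¹ < 2 ^ R

namespace IsListProfile

open Finset

variable {X : Type*} [Fintype X] {R : ℝ} {a b : X → ℝ}

lemma prod_pos (ha : IsListProfile R a) {n : ℕ} (x : Fin n → X) : 0 < ∏ i, a (x i) :=
  Finset.prod_pos fun i _ => ha.pos (x i)

lemma rate_pos (ha : IsListProfile R a) {x : X} (hx : a x < 1) : 0 < R := by
  by_contra! hR
  have hsum : (a x)⁻¹ ≤ ∑ x, (a x)⁻¹ :=
    single_le_sum (fun x _ => (inv_pos.2 (ha.pos x)).le) (mem_univ x)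
  have hrate : (2 : ℝ) ^ R ≤ 1 := Real.rpow_le_one_of_one_le_of_nonpos one_le_two hR
  linarith [ha.sum_inv_lt, (one_lt_inv₀ (ha.pos x)).2 hx]

lemma sum_inv_min_prod_le (ha : IsListProfile R a) (hb : IsListProfile R b) (n : ℕ) :
    ∑ x : Fin n → X, (min (∏ i, a (x i)) (∏ i, b (x i)))⁻¹
      ≤ (∑ x, (a x)⁻¹) ^ n + (∑ x, (b x)⁻¹) ^ n := by
  simp only [Fintype.sum_pow, prod_inv_distrib, ← sum_add_distrib]
  refine sum_le_sum fun x _ => ?_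
  have hapos := (inv_pos.2 (ha.prod_pos x)).le
  have hbpos := (inv_pos.2 (hb.prod_pos x)).le
  rcases min_choice (∏ i, a (x i)) (∏ i, b (x i)) with h | h <;> rw [h] <;> linarith

lemma exists_blockEncoder (ha : IsListProfile R a) (hb : IsListProfile R b) (hR : 0 < R) :
    ∃ F : ∀ n : ℕ, (Fin n → X) → Fin ⌊(2 : ℝ) ^ ((n : ℝ) * R)⌋₊, ∀ᶠ n in atTop, ∀ x,
      #{x' | F n x' = F n x} ≤ ⌈min (∏ i, a (x i)) (∏ i, b (x i))⌉₊ := by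
  have hpow (n : ℕ) : (2 : ℝ) ^ ((n : ℝ) * R) = ((2 : ℝ) ^ R) ^ n := by
    rw [mul_comm, Real.rpow_mul two_pos.le, Real.rpow_natCast]
  have hB : 1 < (2 : ℝ) ^ R := Real.one_lt_rpow one_lt_two hR
  have (n : ℕ) : Nonempty (Fin ⌊(2 : ℝ) ^ ((n : ℝ) * R)⌋₊) :=
    Fin.pos_iff_nonempty.1 <| Nat.floor_pos.2 <| by rw [hpow]; exact one_le_pow₀ hB.le
  obtain ⟨m, hm⟩ := exists_prod_le_two_pow fun x => (ha.pos x).le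
  have hgrowth : (fun n : ℕ => 2 * ((∑ x, (a x)⁻¹) ^ n + (∑ x, (b x)⁻¹) ^ n) +
      (m * (n : ℝ) ^ 1 + 1 ^ n)) =o[atTop] fun n => ((2 : ℝ) ^ R) ^ n := by
    have hexp {c : X → ℝ} (hc : IsListProfile R c) :
        (fun n : ℕ => (∑ x, (c x)⁻¹) ^ n) =o[atTop] fun n => ((2 : ℝ) ^ R) ^ n :=
      isLittleO_pow_pow_of_lt_left (sum_nonneg fun x _ => (inv_pos.2 (hc.pos x)).le) hc.sum_inv_lt
    exact (((hexp ha).add (hexp hb)).const_mul_left 2).add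
      (((isLittleO_pow_const_const_pow_of_one_lt 1 hB).const_mul_left _).add
        (isLittleO_pow_pow_of_lt_left zero_le_one hB))
  have hencoder : ∀ᶠ n : ℕ in atTop, ∃ f : (Fin n → X) → Fin ⌊(2 : ℝ) ^ ((n : ℝ) * R)⌋₊, ∀ x,
      #{x' | f x' = f x} ≤ ⌈min (∏ i, a (x i)) (∏ i, b (x i))⌉₊ := by
    filter_upwards [eventually_le_natFloor_pow hB hgrowth] with n hn
    refine exists_encoder_card_fiber_le_ceil (K := m * n)
      (fun x => lt_min (ha.prod_pos x) (hb.prod_pos x))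
      (fun x => (min_le_left _ _).trans (hm n x)) ?_
    rw [hpow]
    refine le_trans ?_ hn
    rw [pow_one, one_pow, Nat.cast_mul]
    gcongr
    exact sum_inv_min_prod_le ha hb n
  exact ⟨fun n => Classical.epsilon _, hencoder.mono fun n hn => Classical.epsilon_spec hn⟩

end IsListProfile

namespace IsPMF

open Finset

variable {X Y : Type*} [Fintype X] [Fintype Y]

lemma exists_pos {P : X → ℝ} (hP : IsPMF P) : ∃ x, 0 < P x := by
  obtain ⟨x, -, hx⟩ := exists_lt_of_sum_lt (s := univ) (f := 0) (g := P) (by simp [hP.2])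
  exact ⟨x, hx⟩

lemma exists_lt_one_of_sum_mul_rpow_lt_one {P : X → ℝ} (hP : IsPMF P) {φ : X → ℝ} {ρ : ℝ}
    (hρ : 0 ≤ ρ) (h : ∑ x, P x * φ x ^ ρ < 1) : ∃ x, φ x < 1 := by
  by_contra! hφ
  refine h.not_ge (hP.2.symm.trans_le (sum_le_sum fun x _ => ?_))
  exact le_mul_of_one_le_right (hP.1 x) (Real.one_le_rpow (hφ x) hρ)

variable {P : X × Y → ℝ}

lemma fst (hP : IsPMF P) : IsPMF fun x => ∑ y, P (x, y) :=
  ⟨fun _ => sum_nonneg fun _ _ => hP.1 _, by rw [← Fintype.sum_prod_type, hP.2]⟩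

lemma snd (hP : IsPMF P) : IsPMF fun y => ∑ x, P (x, y) :=
  ⟨fun _ => sum_nonneg fun _ _ => hP.1 _, by rw [← Fintype.sum_prod_type_right, hP.2]⟩

end IsPMF

section IID

open Finset

variable {X Y : Type*} [Fintype X] [Fintype Y]

lemma sum_prod_pair {M : Type*} [CommSemiring M] (h : X × Y → M) (n : ℕ) :
    ∑ p : (Fin n → X) × (Fin n → Y), ∏ i, h (p.1 i, p.2 i) = (∑ q, h q) ^ n := by
  rw [Fintype.sum_pow]
  exact (Fintype.sum_equiv (Equiv.arrowProdEquivProdArrow (Fin n) (fun _ => X) (fun _ => Y)) _ _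
    fun _ => rfl).symm

lemma IsPMF.iid {P : X × Y → ℝ} (hP : IsPMF P) (n : ℕ) :
    IsPMF fun p : (Fin n → X) × (Fin n → Y) => ∏ i, P (p.1 i, p.2 i) :=
  ⟨fun _ => prod_nonneg fun _ _ => hP.1 _, by rw [sum_prod_pair, hP.2, one_pow]⟩

lemma sum_iid_mul_rpow_le {P φ : X × Y → ℝ} (hP : IsPMF P) (hφ : ∀ q, 0 ≤ φ q) {ρ : ℝ}
    (hρ : 0 ≤ ρ) {n : ℕ} {Φ : (Fin n → X) × (Fin n → Y) → ℝ} (hΦ₀ : ∀ p, 0 ≤ Φ p)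
    (hΦ : ∀ p, Φ p ≤ ∏ i, φ (p.1 i, p.2 i)) :
    ∑ p, (∏ i, P (p.1 i, p.2 i)) * Φ p ^ ρ ≤ (∑ q, P q * φ q ^ ρ) ^ n := by
  rw [← sum_prod_pair]
  refine sum_le_sum fun p _ => ?_
  rw [prod_mul_distrib, Real.finsetProd_rpow _ _ fun i _ => hφ _]
  exact mul_le_mul_of_nonneg_left (Real.rpow_le_rpow (hΦ₀ p) (hΦ p) hρ) ((hP.iid n).1 p)

end IID

section ListSize

open Finset

variable {X Y : Type*} [Fintype X] [Fintype Y] {MX MY : ℕ}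

lemma jointListSize_eq_mul (f : X → Fin MX) (g : Y → Fin MY) (x : X) (y : Y) :
    jointListSize f g x y = #{x' | f x' = f x} * #{y' | g y' = g y} := by
  rw [jointListSize, ← card_product, ← filter_product, univ_product_univ]

lemma jointListSize_pos (f : X → Fin MX) (g : Y → Fin MY) (x : X) (y : Y) :
    0 < jointListSize f g x y :=
  card_pos.2 ⟨(x, y), by simp⟩

lemma one_le_sum_mul_jointListSize_rpow {P : X × Y → ℝ} (hP : IsPMF P) {ρ : ℝ} (hρ : 0 ≤ ρ)
    (f : X → Fin MX) (g : Y → Fin MY) :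
    1 ≤ ∑ p, P p * (jointListSize f g p.1 p.2 : ℝ) ^ ρ := by
  refine hP.2.symm.trans_le (sum_le_sum fun p _ => le_mul_of_one_le_right (hP.1 p) ?_)
  exact Real.one_le_rpow (by exact_mod_cast jointListSize_pos f g p.1 p.2) hρ

lemma natCeil_rpow_le {ρ t : ℝ} (hρ : 0 ≤ ρ) (ht : 0 ≤ t) :
    (⌈t⌉₊ : ℝ) ^ ρ ≤ 1 + 2 ^ ρ * t ^ ρ := by
  rw [← Real.mul_rpow two_pos.le ht]
  have hnonneg : 0 ≤ (2 * t) ^ ρ := by positivity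
  rcases le_total t 1 with h | h
  · have hceil : (⌈t⌉₊ : ℝ) ≤ 1 := by exact_mod_cast Nat.ceil_le.2 (by simpa using h)
    linarith [Real.rpow_le_one (Nat.cast_nonneg _) hceil hρ]
  · have hceil : (⌈t⌉₊ : ℝ) ≤ 2 * t := by linarith [Nat.ceil_lt_add_one ht]
    linarith [Real.rpow_le_rpow (Nat.cast_nonneg _) hceil hρ]

lemma sum_mul_jointListSize_rpow_le {P : X × Y → ℝ} (hP : IsPMF P) {ρ : ℝ} (hρ : 0 ≤ ρ)
    {A : X → ℝ} {B : Y → ℝ} (hA : ∀ x, 0 ≤ A x) (hB : ∀ y, 0 ≤ B y)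
    {f : X → Fin MX} {g : Y → Fin MY} (hf : ∀ x, #{x' | f x' = f x} ≤ ⌈A x⌉₊)
    (hg : ∀ y, #{y' | g y' = g y} ≤ ⌈B y⌉₊) :
    ∑ p, P p * (jointListSize f g p.1 p.2 : ℝ) ^ ρ ≤
      1 + 2 ^ ρ * (∑ p, P p * A p.1 ^ ρ + ∑ p, P p * B p.2 ^ ρ)
        + 2 ^ ρ * 2 ^ ρ * ∑ p, P p * (A p.1 * B p.2) ^ ρ := by
  rw [← hP.2, mul_add, mul_sum, mul_sum, mul_sum, ← sum_add_distrib, ← sum_add_distrib,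
    ← sum_add_distrib]
  refine sum_le_sum fun p _ => ?_
  have hcellX : (#{x' | f x' = f p.1} : ℝ) ^ ρ ≤ 1 + 2 ^ ρ * A p.1 ^ ρ :=
    (Real.rpow_le_rpow (Nat.cast_nonneg _) (by exact_mod_cast hf p.1) hρ).trans
      (natCeil_rpow_le hρ (hA _))
  have hcellY : (#{y' | g y' = g p.2} : ℝ) ^ ρ ≤ 1 + 2 ^ ρ * B p.2 ^ ρ :=
    (Real.rpow_le_rpow (Nat.cast_nonneg _) (by exact_mod_cast hg p.2) hρ).trans
      (natCeil_rpow_le hρ (hB _))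
  have hAρ : 0 ≤ A p.1 ^ ρ := Real.rpow_nonneg (hA _) ρ
  rw [jointListSize_eq_mul, Nat.cast_mul, Real.mul_rpow (Nat.cast_nonneg _) (Nat.cast_nonneg _),
    Real.mul_rpow (hA _) (hB _)]
  calc P p * ((#{x' | f x' = f p.1} : ℝ) ^ ρ * (#{y' | g y' = g p.2} : ℝ) ^ ρ)
      ≤ P p * ((1 + 2 ^ ρ * A p.1 ^ ρ) * (1 + 2 ^ ρ * B p.2 ^ ρ)) := by
        gcongr
        exact hP.1 p
    _ = _ := by ring

end ListSize

section OneLetter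

variable {X Y : Type*} [Fintype X] [Fintype Y] {ρ : ℝ}

open Finset

lemma renyiEntropy_eq_logb (hρ : 0 < ρ) {P : X → ℝ} (hP : 0 < ∑ x, P x ^ (1 / (1 + ρ))) :
    renyiEntropy (1 / (1 + ρ)) P =
      Real.logb 2 ((∑ x, P x ^ (1 / (1 + ρ))) * (∑ x, P x ^ (1 / (1 + ρ))) ^ ρ⁻¹) := by
  have hcoef : (1 - 1 / (1 + ρ))⁻¹ = 1 + ρ⁻¹ := by
    rw [one_sub_div (by positivity), add_sub_cancel_left, inv_div, add_div, div_self hρ.ne',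
      one_div, add_comm]
  rw [renyiEntropy, hcoef, Real.logb_mul hP.ne' (by positivity),
    Real.logb_rpow_eq_mul_logb_of_pos hP, one_add_mul]

lemma renyiEntropy_add_relAlphaEntropy (hρ : 0 < ρ) {P Q : X → ℝ}
    (hPQ : 0 < ∑ x, P x * Q x ^ (1 / (1 + ρ) - 1)) (hQ : 0 < ∑ x, Q x ^ (1 / (1 + ρ))) :
    renyiEntropy (1 / (1 + ρ)) P + relAlphaEntropy (1 / (1 + ρ)) P Q =
      Real.logb 2 ((∑ x, Q x ^ (1 / (1 + ρ))) * (∑ x, P x * Q x ^ (1 / (1 + ρ) - 1)) ^ ρ⁻¹) := by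
  have hcoef : 1 / (1 + ρ) / (1 - 1 / (1 + ρ)) = ρ⁻¹ := by
    rw [one_sub_div (by positivity), add_sub_cancel_left, div_div_div_cancel_right₀ (by positivity),
      one_div]
  rw [renyiEntropy, relAlphaEntropy, hcoef, Real.logb_mul hQ.ne' (by positivity),
    Real.logb_rpow_eq_mul_logb_of_pos hPQ]
  ring

lemma rpow_mul_lt_one {c s : ℝ} (hρ : 0 < ρ) (hc : 0 ≤ c) (hs : 0 < s)
    (h : c < (s ^ ρ⁻¹)⁻¹) : c ^ ρ * s < 1 := by
  have hlt : c * s ^ ρ⁻¹ < 1 := by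
    rwa [← lt_inv_mul_iff₀' (by positivity), mul_one]
  calc c ^ ρ * s = (c * s ^ ρ⁻¹) ^ ρ := by
        rw [Real.mul_rpow hc (by positivity), Real.rpow_inv_rpow hs.le hρ.ne']
    _ < 1 := Real.rpow_lt_one (by positivity) hlt hρ

lemma mul_div_rpow_add_rpow_le {p c δ : ℝ} (hρ : 0 < ρ) (hp : 0 ≤ p) (hc : 0 ≤ c) (hδ : 0 ≤ δ) :
    p * (c / (p ^ (1 / (1 + ρ)) + δ)) ^ ρ ≤ c ^ ρ * p ^ (1 / (1 + ρ)) := by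
  rcases hp.eq_or_lt with rfl | hp
  · simp only [zero_mul]
    positivity
  have hexp : 1 - 1 / (1 + ρ) * ρ = 1 / (1 + ρ) := by field_simp; ring
  calc p * (c / (p ^ (1 / (1 + ρ)) + δ)) ^ ρ ≤ p * (c / p ^ (1 / (1 + ρ))) ^ ρ := by
        gcongr
        exact le_add_of_nonneg_right hδ
    _ = c ^ ρ * p ^ (1 - 1 / (1 + ρ) * ρ) := by
        rw [Real.div_rpow hc (by positivity), ← Real.rpow_mul hp.le, Real.rpow_sub hp,
          Real.rpow_one]
        ring
    _ = c ^ ρ * p ^ (1 / (1 + ρ)) := by rw [hexp]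

lemma IsPMF.exists_isListProfile {P : X → ℝ} (hP : IsPMF P) (hρ : 0 < ρ) {R : ℝ}
    (hR : renyiEntropy (1 / (1 + ρ)) P < R) :
    ∃ a, IsListProfile R a ∧ ∑ x, P x * a x ^ ρ < 1 := by
  have hS : 0 < ∑ x, P x ^ (1 / (1 + ρ)) := by
    obtain ⟨x, hx⟩ := hP.exists_pos
    exact sum_pos' (fun x _ => Real.rpow_nonneg (hP.1 x) _)
      ⟨x, mem_univ x, Real.rpow_pos_of_pos hx _⟩
  rw [renyiEntropy_eq_logb hρ hS, Real.logb_lt_iff_lt_rpow one_lt_two (by positivity)] at hR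
  set S := ∑ x, P x ^ (1 / (1 + ρ))
  obtain ⟨c, hc, hcS⟩ : ∃ c, S / 2 ^ R < c ∧ c < (S ^ ρ⁻¹)⁻¹ := exists_between <| by
    rwa [div_lt_iff₀ (by positivity), inv_mul_eq_div, lt_div_iff₀ (by positivity)]
  have hc₀ : 0 < c := (by positivity : 0 < S / 2 ^ R).trans hc
  -- The enlargement `δ` keeps `a` finite off the support of `P`.
  obtain ⟨δ, hδ, hδc⟩ := exists_pos_mul_lt (sub_pos.2 ((div_lt_iff₀ (by positivity)).1 hc))
    (Fintype.card X : ℝ)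
  have hpos (x : X) : 0 < P x ^ (1 / (1 + ρ)) + δ :=
    add_pos_of_nonneg_of_pos (Real.rpow_nonneg (hP.1 x) _) hδ
  refine ⟨fun x => c / (P x ^ (1 / (1 + ρ)) + δ), ⟨fun x => div_pos hc₀ (hpos x), ?_⟩, ?_⟩
  · have hsum : ∑ x, (P x ^ (1 / (1 + ρ)) + δ) = S + Fintype.card X * δ := by
      rw [sum_add_distrib, sum_const, card_univ, nsmul_eq_mul]
    simp only [inv_div]
    rw [← sum_div, hsum, div_lt_iff₀' hc₀]
    linarith
  · calc ∑ x, P x * (c / (P x ^ (1 / (1 + ρ)) + δ)) ^ ρ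
        ≤ ∑ x, c ^ ρ * P x ^ (1 / (1 + ρ)) :=
          sum_le_sum fun x _ => mul_div_rpow_add_rpow_le hρ (hP.1 x) hc₀.le hδ.le
      _ = c ^ ρ * S := by rw [← mul_sum]
      _ < 1 := rpow_mul_lt_one hρ hc₀.le hS hcS

lemma exists_lt_exists_lt_mul_lt {u v t : ℝ} (hu : 0 < u) (hv : 0 < v) (h : u * v < t) :
    ∃ c > u, ∃ d > v, c * d < t := by
  obtain ⟨c, huc, hct⟩ := exists_between ((lt_div_iff₀ hv).2 h)
  have hc : 0 < c := hu.trans huc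
  obtain ⟨d, hvd, hdt⟩ := exists_between ((lt_div_iff₀' hc).2 ((lt_div_iff₀ hv).1 hct))
  exact ⟨c, huc, d, hvd, (lt_div_iff₀' hc).1 hdt⟩

lemma isListProfile_div_rpow {Q : X → ℝ} (hQ : ∀ x, 0 < Q x) {α c R : ℝ} (hc₀ : 0 < c)
    (hc : (∑ x, Q x ^ α) / 2 ^ R < c) : IsListProfile R fun x => c / Q x ^ α := by
  refine ⟨fun x => div_pos hc₀ (Real.rpow_pos_of_pos (hQ x) α), ?_⟩
  simp only [inv_div]
  rwa [← sum_div, div_lt_comm₀ hc₀ (by positivity)]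

lemma sum_mul_rpow {u : X → ℝ} {v : Y → ℝ} (hu : ∀ x, 0 ≤ u x) (hv : ∀ y, 0 ≤ v y) (α : ℝ) :
    ∑ p : X × Y, (u p.1 * v p.2) ^ α = (∑ x, u x ^ α) * ∑ y, v y ^ α := by
  rw [Fintype.sum_mul_sum, Fintype.sum_prod_type]
  simp only [Real.mul_rpow (hu _) (hv _)]

lemma div_rpow_mul_div_rpow_rpow {q s c d : ℝ} (hρ : 0 < ρ) (hq : 0 < q) (hs : 0 < s)
    (hc : 0 < c) (hd : 0 < d) :
    (c / q ^ (1 / (1 + ρ)) * (d / s ^ (1 / (1 + ρ)))) ^ ρ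
      = (c * d) ^ ρ * (q * s) ^ (1 / (1 + ρ) - 1) := by
  have hexp : 1 / (1 + ρ) - 1 = -(1 / (1 + ρ) * ρ) := by field_simp; ring
  rw [div_mul_div_comm, ← Real.mul_rpow hq.le hs.le, Real.div_rpow (by positivity) (by positivity),
    ← Real.rpow_mul (by positivity), hexp, Real.rpow_neg (by positivity), div_eq_mul_inv]

lemma IsPMF.exists_isListProfile_pair {P : X × Y → ℝ} (hP : IsPMF P) (hρ : 0 < ρ)
    {QX : X → ℝ} {QY : Y → ℝ} (hQX : ∀ x, 0 < QX x) (hQY : ∀ y, 0 < QY y) {RX RY : ℝ}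
    (hR : renyiEntropy (1 / (1 + ρ)) P +
      relAlphaEntropy (1 / (1 + ρ)) P (fun p => QX p.1 * QY p.2) < RX + RY) :
    ∃ a b, IsListProfile RX a ∧ IsListProfile RY b ∧ ∑ p, P p * (a p.1 * b p.2) ^ ρ < 1 := by
  obtain ⟨p₀, hp₀⟩ := hP.exists_pos
  have : Nonempty X := ⟨p₀.1⟩
  have : Nonempty Y := ⟨p₀.2⟩
  have hQ (p : X × Y) : 0 < QX p.1 * QY p.2 := mul_pos (hQX _) (hQY _)
  have hSX : 0 < ∑ x, QX x ^ (1 / (1 + ρ)) :=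
    sum_pos (fun x _ => Real.rpow_pos_of_pos (hQX x) _) univ_nonempty
  have hSY : 0 < ∑ y, QY y ^ (1 / (1 + ρ)) :=
    sum_pos (fun y _ => Real.rpow_pos_of_pos (hQY y) _) univ_nonempty
  have hT : 0 < ∑ p : X × Y, P p * (QX p.1 * QY p.2) ^ (1 / (1 + ρ) - 1) :=
    sum_pos' (fun p _ => mul_nonneg (hP.1 p) (Real.rpow_nonneg (hQ p).le _))
      ⟨p₀, mem_univ _, mul_pos hp₀ (Real.rpow_pos_of_pos (hQ p₀) _)⟩
  have hprod := sum_mul_rpow (fun x => (hQX x).le) (fun y => (hQY y).le) (1 / (1 + ρ))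
  rw [renyiEntropy_add_relAlphaEntropy hρ hT (hprod ▸ mul_pos hSX hSY), hprod,
    Real.logb_lt_iff_lt_rpow one_lt_two (by positivity), Real.rpow_add two_pos] at hR
  set SX := ∑ x, QX x ^ (1 / (1 + ρ))
  set SY := ∑ y, QY y ^ (1 / (1 + ρ))
  set T := ∑ p : X × Y, P p * (QX p.1 * QY p.2) ^ (1 / (1 + ρ) - 1)
  obtain ⟨c, hc, d, hd, hcd⟩ : ∃ c > SX / 2 ^ RX, ∃ d > SY / 2 ^ RY, c * d < (T ^ ρ⁻¹)⁻¹ :=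
    exists_lt_exists_lt_mul_lt (by positivity) (by positivity) <| by
      rwa [div_mul_div_comm, div_lt_iff₀ (by positivity), inv_mul_eq_div,
        lt_div_iff₀ (by positivity)]
  have hc₀ : 0 < c := (by positivity : 0 < SX / 2 ^ RX).trans hc
  have hd₀ : 0 < d := (by positivity : 0 < SY / 2 ^ RY).trans hd
  refine ⟨_, _, isListProfile_div_rpow hQX hc₀ hc, isListProfile_div_rpow hQY hd₀ hd, ?_⟩
  calc ∑ p : X × Y, P p * (c / QX p.1 ^ (1 / (1 + ρ)) * (d / QY p.2 ^ (1 / (1 + ρ)))) ^ ρ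
      = (c * d) ^ ρ * T := by
        rw [mul_sum]
        refine sum_congr rfl fun p _ => ?_
        rw [div_rpow_mul_div_rpow_rpow hρ (hQX _) (hQY _) hc₀ hd₀, mul_left_comm]
    _ < 1 := rpow_mul_lt_one hρ (by positivity) hT hcd

lemma isPMF_uniform (X : Type*) [Fintype X] [Nonempty X] :
    IsPMF fun _ : X => (Fintype.card X : ℝ)⁻¹ :=
  ⟨fun _ => by positivity, by simp⟩

lemma exists_relAlphaEntropy_lt_of_Kdep_lt [Nonempty X] [Nonempty Y] {α r : ℝ} {P : X × Y → ℝ}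
    (h : Kdep α P < r) : ∃ QX : X → ℝ, ∃ QY : Y → ℝ, (∀ x, 0 < QX x) ∧ (∀ y, 0 < QY y) ∧
      relAlphaEntropy α P (fun p => QX p.1 * QY p.2) < r := by
  -- Without a feasible point, `sInf ∅ = 0` would make `h` uninformative.
  obtain ⟨_, ⟨QX, QY, -, -, hQX, hQY, rfl⟩, hlt⟩ := exists_lt_of_csInf_lt
    (by exact ⟨_, _, _, isPMF_uniform X, isPMF_uniform Y, fun _ => by positivity,
      fun _ => by positivity, rfl⟩) h
  exact ⟨QX, QY, hQX, hQY, hlt⟩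

end OneLetter

section Achievability

variable {X Y : Type*} [Fintype X] [Fintype Y]

lemma exists_encoders_tendsto_one_of_isListProfile {P : X × Y → ℝ} (hP : IsPMF P) {ρ : ℝ}
    (hρ : 0 ≤ ρ) {RX RY : ℝ} {aX bX : X → ℝ} {aY bY : Y → ℝ} (haX : IsListProfile RX aX)
    (haY : IsListProfile RY aY) (hbX : IsListProfile RX bX) (hbY : IsListProfile RY bY)
    (hX : ∑ p, P p * aX p.1 ^ ρ < 1) (hY : ∑ p, P p * aY p.2 ^ ρ < 1)
    (hXY : ∑ p, P p * (bX p.1 * bY p.2) ^ ρ < 1) :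
    ∃ (F : ∀ n : ℕ, (Fin n → X) → Fin ⌊(2 : ℝ) ^ ((n : ℝ) * RX)⌋₊)
      (G : ∀ n : ℕ, (Fin n → Y) → Fin ⌊(2 : ℝ) ^ ((n : ℝ) * RY)⌋₊),
      Tendsto
        (fun n : ℕ => ∑ p : (Fin n → X) × (Fin n → Y),
          (∏ i, P (p.1 i, p.2 i)) * (jointListSize (F n) (G n) p.1 p.2 : ℝ) ^ ρ)
        atTop (nhds 1) := by
  obtain ⟨_, haX₁⟩ := hP.exists_lt_one_of_sum_mul_rpow_lt_one hρ hX
  obtain ⟨_, haY₁⟩ := hP.exists_lt_one_of_sum_mul_rpow_lt_one hρ hY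
  obtain ⟨F, hF⟩ := haX.exists_blockEncoder hbX (haX.rate_pos haX₁)
  obtain ⟨G, hG⟩ := haY.exists_blockEncoder hbY (haY.rate_pos haY₁)
  have hvanish {φ : X × Y → ℝ} (hφ : ∀ p, 0 ≤ φ p) (h : ∑ p, P p * φ p ^ ρ < 1) :
      Tendsto (fun n : ℕ => (∑ p, P p * φ p ^ ρ) ^ n) atTop (nhds 0) :=
    tendsto_pow_atTop_nhds_zero_of_lt_one
      (Finset.sum_nonneg fun p _ => mul_nonneg (hP.1 p) (Real.rpow_nonneg (hφ p) ρ)) h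
  have haX₀ (p : X × Y) : 0 ≤ aX p.1 := (haX.pos _).le
  have haY₀ (p : X × Y) : 0 ≤ aY p.2 := (haY.pos _).le
  have hb₀ (p : X × Y) : 0 ≤ bX p.1 * bY p.2 := (mul_pos (hbX.pos _) (hbY.pos _)).le
  have hupper := ((((hvanish haX₀ hX).add (hvanish haY₀ hY)).const_mul (2 ^ ρ)).const_add 1).add
    ((hvanish hb₀ hXY).const_mul (2 ^ ρ * 2 ^ ρ))
  simp only [mul_zero, add_zero] at hupper
  refine ⟨F, G, tendsto_of_tendsto_of_tendsto_of_le_of_le' tendsto_const_nhds hupper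
    (.of_forall fun n => one_le_sum_mul_jointListSize_rpow (hP.iid n) hρ _ _) ?_⟩
  filter_upwards [hF, hG] with n hFn hGn
  have hA₀ (x : Fin n → X) : 0 ≤ min (∏ i, aX (x i)) (∏ i, bX (x i)) :=
    (lt_min (haX.prod_pos x) (hbX.prod_pos x)).le
  have hB₀ (y : Fin n → Y) : 0 ≤ min (∏ i, aY (y i)) (∏ i, bY (y i)) :=
    (lt_min (haY.prod_pos y) (hbY.prod_pos y)).le
  refine (sum_mul_jointListSize_rpow_le (hP.iid n) hρ hA₀ hB₀ hFn hGn).trans ?_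
  gcongr
  · exact sum_iid_mul_rpow_le hP haX₀ hρ (fun p => hA₀ p.1) fun _ => min_le_left _ _
  · exact sum_iid_mul_rpow_le hP haY₀ hρ (fun p => hB₀ p.2) fun _ => min_le_left _ _
  · refine sum_iid_mul_rpow_le hP hb₀ hρ (fun p => mul_nonneg (hA₀ p.1) (hB₀ p.2)) fun p => ?_
    rw [Finset.prod_mul_distrib]
    exact mul_le_mul (min_le_right _ _) (min_le_right _ _) (hB₀ _) (hbX.prod_pos _).le

end Achievability

/-- achievability, IID case: if `R_X > H_{ρ̃}(P_X)`, `R_Y > H_{ρ̃}(P_Y)` and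
`R_X + R_Y > H_{ρ̃}(P_{XY}) + K_{ρ̃}(X;Y)` with `ρ̃ = 1/(1+ρ)`, then there exist encoders
`f_n : X^n → {1,…,⌊2^{nR_X}⌋}` and `g_n : Y^n → {1,…,⌊2^{nR_Y}⌋}` whose `ρ`-th moment of
the joint list size (under the `n`-fold product of `P_{XY}`) tends to `1`. -/
theorem distributed_task_encoding_achievability_iid
    {X Y : Type*} [Fintype X] [Fintype Y]
    (ρ : ℝ) (hρ : 0 < ρ) (P : X × Y → ℝ) (hP : IsPMF P)
    (RX RY : ℝ)
    (hRX : RX > renyiEntropy (1 / (1 + ρ)) (fun x => ∑ y, P (x, y)))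
    (hRY : RY > renyiEntropy (1 / (1 + ρ)) (fun y => ∑ x, P (x, y)))
    (hsum : RX + RY > renyiEntropy (1 / (1 + ρ)) P + Kdep (1 / (1 + ρ)) P) :
    ∃ (F : ∀ n : ℕ, (Fin n → X) → Fin ⌊(2 : ℝ) ^ ((n : ℝ) * RX)⌋₊)
      (G : ∀ n : ℕ, (Fin n → Y) → Fin ⌊(2 : ℝ) ^ ((n : ℝ) * RY)⌋₊),
      Filter.Tendsto
        (fun n : ℕ => ∑ p : (Fin n → X) × (Fin n → Y),
          (∏ i, P (p.1 i, p.2 i)) * (jointListSize (F n) (G n) p.1 p.2 : ℝ) ^ ρ)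
        Filter.atTop (nhds 1) := by
  obtain ⟨p₀, -⟩ := hP.exists_pos
  have : Nonempty X := ⟨p₀.1⟩
  have : Nonempty Y := ⟨p₀.2⟩
  obtain ⟨QX, QY, hQX, hQY, hQ⟩ := exists_relAlphaEntropy_lt_of_Kdep_lt (lt_sub_iff_add_lt'.2 hsum)
  obtain ⟨aX, haX, hX⟩ := hP.fst.exists_isListProfile hρ hRX
  obtain ⟨aY, haY, hY⟩ := hP.snd.exists_isListProfile hρ hRY
  obtain ⟨bX, bY, hbX, hbY, hXY⟩ :=
    hP.exists_isListProfile_pair hρ hQX hQY (lt_sub_iff_add_lt'.1 hQ)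
  simp only [Finset.sum_mul] at hX hY
  rw [← Fintype.sum_prod_type' fun x y => P (x, y) * aX x ^ ρ] at hX
  rw [← Fintype.sum_prod_type_right' fun x y => P (x, y) * aY y ^ ρ] at hY
  exact exists_encoders_tendsto_one_of_isListProfile hP hρ.le haX haY hbX hbY hX hY hXY
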